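/- Let τ > 0 be real and define u : ℝ → ℂ by u(r) := (1/(2τh)) ∫_ℝ e^{−τ|r−r'|/h} f(r') dr'. Then u is twice differentiable on ℝ and satisfies −h² u''(r) + τ² u(r) = f(r) for every r ∈ ℝ; moreover, for every r > b, u(r) = (1/(2τh)) e^{−τr/h} ∫_a^b e^{τr'/h} f(r') dr', and for every r < a, u(r) = (1/(2τh)) e^{τr/h} ∫_a^b e^{−τr'/h} f(r') dr'. -/

import Mathlib

/-!
With `c = τ / h`, splitting the convolution integral at `r' = r` gives
`∫ e^{-c|r-r'|} f(r') dr' = e^{-cr} P(r) + e^{cr} Q(r)`, where `P(r) = ∫_a^r e^{cs} f(s) ds` and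
`Q(r) = ∫_r^b e^{-cs} f(s) ds` (`integral_exp_abs_split`). By the fundamental theorem of calculus
`P' = e^{cr} f` and `Q' = -e^{-cr} f`. In the first derivative of `e^{-cr} P + e^{cr} Q` the two
terms containing `f` cancel, so it can be differentiated again, and in the second derivative they
add up to `-2c f`; this is the equation after multiplication by `1 / (2τh)`. For `r > b` one has
`Q(r) = 0` and `P(r) = P(b)`, and for `r < a` one has `P(r) = 0` and `Q(r) = Q(a)`, which are the
two representation formulas.
-/

open MeasureTheory Filter

/-- Continuity of `f` makes it vanish also at the endpoint `a`. -/
lemma eq_zero_of_le_left {a b : ℝ} {f : ℝ → ℂ} (hf : Continuous f)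
    (hsupp : ∀ r : ℝ, r ∉ Set.Icc a b → f r = 0) {s : ℝ} (hs : s ≤ a) : f s = 0 := by
  have hcl : IsClosed {x : ℝ | f x = 0} := isClosed_eq hf continuous_const
  have hsub : Set.Iio a ⊆ {x : ℝ | f x = 0} := fun x hx =>
    hsupp x fun hx' => absurd hx'.1 (not_le.2 hx)
  have := hcl.closure_subset_iff.2 hsub
  rw [closure_Iio] at this
  exact this hs

/-- Continuity of `f` makes it vanish also at the endpoint `b`. -/
lemma eq_zero_of_right_le {a b : ℝ} {f : ℝ → ℂ} (hf : Continuous f)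
    (hsupp : ∀ r : ℝ, r ∉ Set.Icc a b → f r = 0) {s : ℝ} (hs : b ≤ s) : f s = 0 := by
  have hcl : IsClosed {x : ℝ | f x = 0} := isClosed_eq hf continuous_const
  have hsub : Set.Ioi b ⊆ {x : ℝ | f x = 0} := fun x hx =>
    hsupp x fun hx' => absurd hx'.2 (not_le.2 hx)
  have := hcl.closure_subset_iff.2 hsub
  rw [closure_Ioi] at this
  exact this hs

lemma integral_mul_eq_zero {f w : ℝ → ℂ} {x y : ℝ} (hz : ∀ s ∈ Set.uIcc x y, f s = 0) :
    ∫ s in x..y, w s * f s = 0 := by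
  rw [intervalIntegral.integral_congr (g := fun _ => (0 : ℂ)) fun s hs => by simp [hz s hs]]
  simp

lemma continuous_exp_mul_mul {f : ℝ → ℂ} (hf : Continuous f) (c : ℝ) :
    Continuous fun s : ℝ => ((Real.exp (c * s) : ℝ) : ℂ) * f s := by
  fun_prop

/-- Splitting of the convolution with `e^{-c|·|}` at the singular point of the kernel. -/
lemma integral_exp_abs_split {a b : ℝ} {f : ℝ → ℂ} (hf : Continuous f)
    (hl : ∀ s ≤ a, f s = 0) (hr : ∀ s, b ≤ s → f s = 0) (c r : ℝ) :
    ∫ s : ℝ, ((Real.exp (-c * |r - s|) : ℝ) : ℂ) * f s =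
      ((Real.exp (-c * r) : ℝ) : ℂ) * (∫ s in a..r, ((Real.exp (c * s) : ℝ) : ℂ) * f s) +
      ((Real.exp (c * r) : ℝ) : ℂ) * (∫ s in r..b, ((Real.exp (-c * s) : ℝ) : ℂ) * f s) := by
  -- `[A, B]` contains both the support of `f` and the point `r`
  set A := min a r with hA
  set B := max b r with hB
  have hAa : A ≤ a := min_le_left _ _
  have hAr : A ≤ r := min_le_right _ _
  have hbB : b ≤ B := le_max_left _ _
  have hrB : r ≤ B := le_max_right _ _
  have hi : ∀ (k x y : ℝ), IntervalIntegrable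
      (fun s : ℝ => ((Real.exp (k * s) : ℝ) : ℂ) * f s) volume x y :=
    fun k x y => (continuous_exp_mul_mul hf k).intervalIntegrable x y
  have hK : Continuous fun s : ℝ => ((Real.exp (-c * |r - s|) : ℝ) : ℂ) * f s := by fun_prop
  have hsup : Function.support (fun s : ℝ => ((Real.exp (-c * |r - s|) : ℝ) : ℂ) * f s) ⊆
      Set.Ioc A B := by
    intro s hs
    by_contra hn
    apply hs
    have : f s = 0 := by
      by_cases h1 : s ≤ A
      · exact hl s (h1.trans hAa)
      · refine hr s (hbB.trans ?_)
        by_contra h2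
        exact hn ⟨not_le.1 h1, (not_le.1 h2).le⟩
    simp [this]
  rw [← intervalIntegral.integral_eq_integral_of_support_subset hsup,
    ← intervalIntegral.integral_add_adjacent_intervals (hK.intervalIntegrable A r)
      (hK.intervalIntegrable r B)]
  congr 1
  · rw [← intervalIntegral.integral_add_adjacent_intervals (hi c a A) (hi c A r),
      integral_mul_eq_zero (x := a) (y := A), zero_add, ← intervalIntegral.integral_const_mul]
    · refine intervalIntegral.integral_congr fun s hs => ?_
      rw [Set.uIcc_of_le hAr] at hs
      rw [abs_of_nonneg (sub_nonneg.2 hs.2), ← mul_assoc, ← Complex.ofReal_mul, ← Real.exp_add]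
      ring_nf
    · intro s hs
      rw [Set.uIcc_of_ge hAa] at hs
      exact hl s hs.2
  · rw [← intervalIntegral.integral_add_adjacent_intervals (hi (-c) r B) (hi (-c) B b),
      integral_mul_eq_zero (x := B) (y := b), add_zero, ← intervalIntegral.integral_const_mul]
    · refine intervalIntegral.integral_congr fun s hs => ?_
      rw [Set.uIcc_of_le hrB] at hs
      rw [abs_of_nonpos (sub_nonpos.2 hs.1), ← mul_assoc, ← Complex.ofReal_mul, ← Real.exp_add]
      ring_nf
    · intro s hs
      rw [Set.uIcc_of_ge hbB] at hs
      exact hr s hs.1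

lemma hasDerivAt_ofReal_exp_mul (c r : ℝ) :
    HasDerivAt (fun s : ℝ => ((Real.exp (c * s) : ℝ) : ℂ))
      ((c : ℂ) * ((Real.exp (c * r) : ℝ) : ℂ)) r := by
  have h1 : HasDerivAt (fun s : ℝ => Real.exp (c * s)) (Real.exp (c * r) * (c * 1)) r :=
    ((hasDerivAt_id r).const_mul c).exp
  convert h1.ofReal_comp using 1
  push_cast
  ring

/-- For real `τ > 0`, the function
`u(r) = (1/(2τh)) ∫ e^{−τ|r−r'|/h} f(r') dr'` is twice differentiable, solves
`−h²u'' + τ²u = f`, and satisfies the decaying representation formulas for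
`r > b` and `r < a`. -/
theorem stmt_3 (h : ℝ) (hh : 0 < h) (a b : ℝ) (hab : a ≤ b)
    (f : ℝ → ℂ) (hf : Continuous f)
    (hsupp : ∀ r : ℝ, r ∉ Set.Icc a b → f r = 0)
    (τ : ℝ) (hτ : 0 < τ)
    (u : ℝ → ℂ)
    (hu : ∀ r : ℝ, u r = ((1 / (2 * τ * h) : ℝ) : ℂ) *
        ∫ r' : ℝ, ((Real.exp (-τ * |r - r'| / h) : ℝ) : ℂ) * f r') :
    (∀ r : ℝ, DifferentiableAt ℝ u r ∧ DifferentiableAt ℝ (deriv u) r) ∧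
    (∀ r : ℝ, -(h : ℂ) ^ 2 * deriv (deriv u) r + (τ : ℂ) ^ 2 * u r = f r) ∧
    (∀ r : ℝ, b < r →
      u r = ((1 / (2 * τ * h) : ℝ) : ℂ) * ((Real.exp (-τ * r / h) : ℝ) : ℂ) *
        ∫ r' in a..b, ((Real.exp (τ * r' / h) : ℝ) : ℂ) * f r') ∧
    (∀ r : ℝ, r < a →
      u r = ((1 / (2 * τ * h) : ℝ) : ℂ) * ((Real.exp (τ * r / h) : ℝ) : ℂ) *
        ∫ r' in a..b, ((Real.exp (-τ * r' / h) : ℝ) : ℂ) * f r') := by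
  obtain ⟨c, hc⟩ : ∃ c : ℝ, c = τ / h := ⟨_, rfl⟩
  have hl : ∀ s ≤ a, f s = 0 := fun s hs => eq_zero_of_le_left hf hsupp hs
  have hr : ∀ s, b ≤ s → f s = 0 := fun s hs => eq_zero_of_right_le hf hsupp hs
  have e1 : ∀ x : ℝ, -τ * x / h = -c * x := fun x => by rw [hc]; ring
  have e2 : ∀ x : ℝ, τ * x / h = c * x := fun x => by rw [hc]; ring
  simp only [e1] at hu
  simp only [e1, e2]
  set k : ℂ := ((1 / (2 * τ * h) : ℝ) : ℂ) with hk
  set P : ℝ → ℂ := fun r => ∫ s in a..r, ((Real.exp (c * s) : ℝ) : ℂ) * f s with hP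
  set Q : ℝ → ℂ := fun r => ∫ s in r..b, ((Real.exp (-c * s) : ℝ) : ℂ) * f s with hQ
  set E : ℝ → ℂ := fun r => ((Real.exp (c * r) : ℝ) : ℂ) with hE
  set F : ℝ → ℂ := fun r => ((Real.exp (-c * r) : ℝ) : ℂ) with hF
  have hrep : ∀ r, u r = k * (F r * P r + E r * Q r) := fun r => by
    rw [hu r, integral_exp_abs_split hf hl hr c r]
  have hEF : ∀ r, F r * E r = 1 := fun r => by
    simp only [hE, hF]
    rw [← Complex.ofReal_mul, ← Real.exp_add]
    simp
  have dE : ∀ r, HasDerivAt E (c * E r) r := fun r => hasDerivAt_ofReal_exp_mul c r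
  have dF : ∀ r, HasDerivAt F (-c * F r) r := fun r => by
    have := hasDerivAt_ofReal_exp_mul (-c) r
    rwa [Complex.ofReal_neg] at this
  have dP : ∀ r, HasDerivAt P (E r * f r) r := fun r =>
    (continuous_exp_mul_mul hf c).integral_hasStrictDerivAt a r |>.hasDerivAt
  have dQ : ∀ r, HasDerivAt Q (-(F r * f r)) r := fun r => by
    have hcont := continuous_exp_mul_mul hf (-c)
    exact intervalIntegral.integral_hasDerivAt_left (hcont.intervalIntegrable r b)
      hcont.stronglyMeasurable.stronglyMeasurableAtFilter hcont.continuousAt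
  have du : ∀ r, HasDerivAt u (k * (c * (E r * Q r - F r * P r))) r := fun r => by
    rw [funext hrep]
    refine ((((dF r).mul (dP r)).add ((dE r).mul (dQ r))).const_mul k).congr_deriv ?_
    ring
  have du' : deriv u = fun r => k * (c * (E r * Q r - F r * P r)) := funext fun r => (du r).deriv
  have ddu : ∀ r, HasDerivAt (deriv u) (c ^ 2 * u r - 2 * k * c * f r) r := fun r => by
    rw [du', hrep r]
    refine (((((dE r).mul (dQ r)).sub ((dF r).mul (dP r))).const_mul (c : ℂ)).const_mul
      k).congr_deriv ?_
    linear_combination (-2 * k * c * f r) * hEF r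
  refine ⟨fun r => ⟨(du r).differentiableAt, (ddu r).differentiableAt⟩, fun r => ?_, fun r hbr => ?_,
    fun r hra => ?_⟩
  · have hh' : (h : ℂ) ≠ 0 := by exact_mod_cast hh.ne'
    have hτ' : (τ : ℂ) ≠ 0 := by exact_mod_cast hτ.ne'
    rw [(ddu r).deriv, hk, hc]
    push_cast
    field_simp
    ring
  · have hQ0 : Q r = 0 := integral_mul_eq_zero fun s hs => by
      rw [Set.uIcc_of_ge hbr.le] at hs
      exact hr s hs.1
    have hPb : P r = P b := by
      have hcont := continuous_exp_mul_mul hf c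
      simp only [hP]
      rw [← intervalIntegral.integral_add_adjacent_intervals (hcont.intervalIntegrable a b)
        (hcont.intervalIntegrable b r), integral_mul_eq_zero (x := b) (y := r), add_zero]
      intro s hs
      rw [Set.uIcc_of_le hbr.le] at hs
      exact hr s hs.1
    rw [hrep r, hQ0, hPb]
    simp only [hP, hF]
    ring
  · have hP0 : P r = 0 := integral_mul_eq_zero fun s hs => by
      rw [Set.uIcc_of_ge hra.le] at hs
      exact hl s hs.2
    have hQa : Q r = Q a := by
      have hcont := continuous_exp_mul_mul hf (-c)
      simp only [hQ]
      rw [← intervalIntegral.integral_add_adjacent_intervals (hcont.intervalIntegrable r a)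
        (hcont.intervalIntegrable a b), integral_mul_eq_zero (x := r) (y := a), zero_add]
      intro s hs
      rw [Set.uIcc_of_le hra.le] at hs
      exact hl s hs.2
    rw [hrep r, hP0, hQa]
    simp only [hQ, hE]
    ring
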